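/- Let p be a prime and w ∈ V_5 nonzero. If there exists a nonzero linear binary form ℓ over 𝔽_p that is apolar to w (i.e., w has Waring type ⟨1⟩), then S(w) = p⁴ − p³, i.e., Φ̂(w) = p^{−2} − p^{−3}. -/

import Mathlib

open Finset

/-- Multiplication of binary forms encoded by coefficient tuples: a binary form
`∑ i, f i • x^(a-i) * y^i` of degree `a` is encoded as the tuple `f : Fin (a+1) → k`,
and multiplication of forms is convolution of coefficient tuples. -/
def formMul {k : Type*} [CommRing k] {a b : ℕ} (f : Fin (a + 1) → k)
    (g : Fin (b + 1) → k) : Fin (a + b + 1) → k :=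
  fun i => ∑ q : Fin (a + 1) × Fin (b + 1),
    if (q.1 : ℕ) + (q.2 : ℕ) = (i : ℕ) then f q.1 * g q.2 else 0

/-- The pairing `(w, v) = ∑ i, w i * v i` between `V_n` and `V_n^*`. -/
def pair {k : Type*} [CommRing k] {n : ℕ} (w v : Fin (n + 1) → k) : k :=
  ∑ i, w i * v i

/-- A binary quintic form is singular if it is nonzero and, over an algebraic closure,
it is divisible by the square of a nonzero linear form. -/
def IsSingularQuintic {k : Type*} [Field k] (v : Fin 6 → k) : Prop :=
  v ≠ 0 ∧ ∃ (l : Fin 2 → AlgebraicClosure k) (c : Fin 4 → AlgebraicClosure k),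
    l ≠ 0 ∧
    (fun i => algebraMap k (AlgebraicClosure k) (v i)) = formMul (formMul l l) c

open scoped Classical in
/-- The exponential sum `S(w)` over binary quintic forms that are zero or singular. -/
noncomputable def expSum (p : ℕ) [Fact p.Prime] (w : Fin 6 → ZMod p) : ℂ :=
  ∑ v : Fin 6 → ZMod p,
    if v = 0 ∨ IsSingularQuintic v then
      Complex.exp (2 * Real.pi * Complex.I * ((pair w v).val : ℂ) / (p : ℂ))
    else 0

/-!
By orthogonality, `S(w)` is minus the sum of the character over the forms with no double root.
These forms are stable under nonzero scalars, so averaging over scalars turns that sum into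
a count of the double-root-free forms and of those among them that pair to zero with `w`.

A form of degree `d` has no double root iff its dehomogenization `v(1, X)` is squarefree of degree
`d` or `d - 1`, and squarefree polynomials are counted by means of the unique factorization
`f = g² h` with `g` monic and `h` squarefree. Apolarity to a linear form forces the pairing with
`w` to be a multiple of the value of the form at the root of the linear form. If this root is a
finite `t`, dividing by `X - t` matches the squarefree polynomials of degree `d` vanishing at `t`
with those of degree `d - 1` not vanishing at `t`. In all cases the forms without double root that
pair to zero with `w` are as numerous as the squarefree polynomials of degree `d - 1`.
-/

open Polynomial

section SquarefreePart

variable {M : Type*} [CommMonoidWithZero M] [UniqueFactorizationMonoid M]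

theorem exists_sq_mul_squarefree {a : M} (ha : a ≠ 0) : ∃ g h, Squarefree h ∧ g ^ 2 * h = a := by
  induction a using WfDvdMonoid.induction_on_irreducible with
  | zero => exact absurd rfl ha
  | unit u hu => exact ⟨1, u, hu.squarefree, by rw [one_pow, one_mul]⟩
  | mul a i ha₀ hi ih =>
    obtain ⟨g, h, hh, rfl⟩ := ih ha₀
    by_cases hdvd : i ∣ h
    · obtain ⟨h', rfl⟩ := hdvd
      exact ⟨g * i, h', hh.of_mul_right, by rw [mul_pow, sq i, mul_assoc, mul_assoc, mul_left_comm]⟩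
    · exact ⟨g, i * h,
        squarefree_mul_iff.2 ⟨hi.isRelPrime_iff_not_dvd.2 hdvd, hi.squarefree, hh⟩,
        mul_left_comm _ _ _⟩

theorem dvd_of_sq_mul_eq_sq_mul_squarefree {g g' h h' : M} (hg : g ≠ 0) (hh' : Squarefree h')
    (H : g ^ 2 * h = g' ^ 2 * h') : g ∣ g' := by
  obtain ⟨a, b, d, hab, rfl, rfl⟩ := UniqueFactorizationMonoid.exists_reduced_factors g hg g'
  have hd : d ^ 2 ≠ 0 := pow_ne_zero 2 (left_ne_zero_of_mul hg)
  have reduced : a ^ 2 * h = b ^ 2 * h' :=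
    mul_left_cancel₀ hd (by rw [← mul_assoc, ← mul_pow, H, mul_pow, mul_assoc])
  have ha : IsUnit a := hh' a <| by
    rw [← sq]
    exact hab.pow.dvd_of_dvd_mul_left ⟨h, reduced.symm⟩
  exact mul_dvd_mul_left d ha.dvd

end SquarefreePart

section SquarefreePolynomials

variable {F : Type*} [Field F]

theorem exists_monic_sq_mul_squarefree {f : F[X]} (hf : f ≠ 0) :
    ∃ g h : F[X], g.Monic ∧ Squarefree h ∧ g ^ 2 * h = f := by
  obtain ⟨g, h, hh, rfl⟩ := exists_sq_mul_squarefree hf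
  have hg : g ≠ 0 := by
    rintro rfl
    simp at hf
  have hc : g.leadingCoeff ≠ 0 := leadingCoeff_ne_zero.2 hg
  refine ⟨g * C g.leadingCoeff⁻¹, C (g.leadingCoeff ^ 2) * h, monic_mul_leadingCoeff_inv hg, ?_, ?_⟩
  · exact (associated_unit_mul_left h _ (isUnit_C.2 (pow_ne_zero 2 hc).isUnit)).squarefree_iff.2 hh
  · have hcc : (C g.leadingCoeff⁻¹) ^ 2 * C (g.leadingCoeff ^ 2) = 1 := by
      rw [← C_pow, ← C_mul, ← mul_pow, inv_mul_cancel₀ hc, one_pow, C_1]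
    linear_combination g ^ 2 * h * hcc

variable [Fintype F] [DecidableEq F]

/-- The polynomials of degree at most `n` whose coefficient of `X ^ n` lies in `S`: the monic
polynomials of degree `n` for `S = {1}`, all polynomials of degree `n` for `S = {0}ᶜ` (excluding
the zero polynomial when `n = 0`). -/
noncomputable def polysCoeffMem (n : ℕ) (S : Finset F) : Finset F[X] :=
  ({v | v (Fin.last n) ∈ S} : Finset (Fin (n + 1) → F)).map ⟨ofFn (n + 1), injective_ofFn _⟩

theorem mem_polysCoeffMem {n : ℕ} {S : Finset F} {f : F[X]} :
    f ∈ polysCoeffMem n S ↔ f.natDegree ≤ n ∧ f.coeff n ∈ S := by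
  simp only [polysCoeffMem, mem_map, mem_filter_univ, Function.Embedding.coeFn_mk]
  constructor
  · rintro ⟨v, hv, rfl⟩
    exact ⟨Nat.lt_succ_iff.1 (ofFn_natDegree_lt n.succ_pos v),
      (ofFn_coeff_eq_val_of_lt v n.lt_succ_self).symm ▸ hv⟩
  · rintro ⟨hn, hS⟩
    exact ⟨toFn (n + 1) f, hS, ofFn_comp_toFn_eq_id_of_natDegree_lt (Nat.lt_succ_iff.2 hn)⟩

theorem card_polysCoeffMem (n : ℕ) (S : Finset F) :
    #(polysCoeffMem n S) = Fintype.card F ^ n * #S := by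
  have h : ({v | v (Fin.last n) ∈ S} : Finset (Fin (n + 1) → F)) =
      Fintype.piFinset (Fin.snoc (α := fun _ => Finset F) (fun _ => univ) S) := by
    ext v
    simp [Fin.forall_fin_succ']
  rw [polysCoeffMem, card_map, h, Fintype.card_piFinset, Fin.prod_univ_castSucc]
  simp

theorem mem_polysCoeffMem_one {n : ℕ} {f : F[X]} :
    f ∈ polysCoeffMem n {1} ↔ f.Monic ∧ f.natDegree = n := by
  rw [mem_polysCoeffMem, mem_singleton]
  constructor
  · rintro ⟨hn, h1⟩
    have hf := monic_of_natDegree_le_of_coeff_eq_one n hn h1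
    exact ⟨hf, natDegree_eq_of_le_of_coeff_ne_zero hn (h1 ▸ one_ne_zero)⟩
  · rintro ⟨hf, rfl⟩
    exact ⟨le_rfl, hf.coeff_natDegree⟩

theorem mem_polysCoeffMem_compl_zero {n : ℕ} {f : F[X]} :
    f ∈ polysCoeffMem n {0}ᶜ ↔ f ≠ 0 ∧ f.natDegree = n := by
  rw [mem_polysCoeffMem, mem_compl, mem_singleton]
  constructor
  · rintro ⟨hn, h0⟩
    exact ⟨fun hf => h0 (by rw [hf, coeff_zero]), natDegree_eq_of_le_of_coeff_ne_zero hn h0⟩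
  · rintro ⟨hf, rfl⟩
    exact ⟨le_rfl, leadingCoeff_ne_zero.2 hf⟩

variable (F) in
open scoped Classical in
/-- The squarefree polynomials of degree `n` over a finite field, not necessarily monic. -/
noncomputable def squarefreePolys (n : ℕ) : Finset F[X] :=
  {f ∈ polysCoeffMem n {0}ᶜ | Squarefree f}

theorem mem_squarefreePolys {n : ℕ} {f : F[X]} :
    f ∈ squarefreePolys F n ↔ Squarefree f ∧ f.natDegree = n := by
  classical
  rw [squarefreePolys, mem_filter, mem_polysCoeffMem_compl_zero]
  exact ⟨fun h => ⟨h.2, h.1.2⟩, fun h => ⟨⟨h.1.ne_zero, h.2⟩, h.1⟩⟩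

theorem card_polysCoeffMem_compl_zero_eq_sum (n : ℕ) :
    #(polysCoeffMem n ({0}ᶜ : Finset F)) =
      ∑ k ∈ range (n / 2 + 1), Fintype.card F ^ k * #(squarefreePolys F (n - 2 * k)) := by
  have hcard (k : ℕ) : Fintype.card F ^ k = #(polysCoeffMem k ({1} : Finset F)) := by
    rw [card_polysCoeffMem, card_singleton, mul_one]
  simp_rw [hcard, ← card_product]
  rw [← card_sigma]
  symm
  refine card_bij (fun x _ => x.2.1 ^ 2 * x.2.2) ?maps ?injective ?surjective
  case maps =>
    rintro ⟨k, g, h⟩ hx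
    simp only [mem_sigma, mem_product, mem_polysCoeffMem_one, mem_squarefreePolys, mem_range] at hx
    obtain ⟨hk, ⟨hg, hgk⟩, hh, hhn⟩ := hx
    refine mem_polysCoeffMem_compl_zero.2 ⟨mul_ne_zero (hg.pow 2).ne_zero hh.ne_zero, ?_⟩
    rw [(hg.pow 2).natDegree_mul' hh.ne_zero, hg.natDegree_pow]
    omega
  case injective =>
    rintro ⟨k, g, h⟩ hx ⟨k', g', h'⟩ hx' H
    simp only [mem_sigma, mem_product, mem_polysCoeffMem_one, mem_squarefreePolys] at hx hx' H
    obtain ⟨-, ⟨hg, rfl⟩, hh, -⟩ := hx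
    obtain ⟨-, ⟨hg', rfl⟩, hh', -⟩ := hx'
    obtain rfl : g = g' := eq_of_monic_of_associated hg hg' <| associated_of_dvd_dvd
      (dvd_of_sq_mul_eq_sq_mul_squarefree hg.ne_zero hh' H)
      (dvd_of_sq_mul_eq_sq_mul_squarefree hg'.ne_zero hh H.symm)
    obtain rfl := mul_left_cancel₀ (hg.pow 2).ne_zero H
    rfl
  case surjective =>
    intro f hf
    obtain ⟨hf, hfn⟩ := mem_polysCoeffMem_compl_zero.1 hf
    obtain ⟨g, h, hg, hh, rfl⟩ := exists_monic_sq_mul_squarefree hf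
    rw [(hg.pow 2).natDegree_mul' hh.ne_zero, hg.natDegree_pow] at hfn
    refine ⟨⟨g.natDegree, g, h⟩, ?_, rfl⟩
    simp only [mem_sigma, mem_product, mem_polysCoeffMem_one, mem_squarefreePolys, mem_range]
    exact ⟨by omega, ⟨hg, trivial⟩, hh, by omega⟩

theorem card_squarefreePolys_add_two (n : ℕ) :
    #(squarefreePolys F (n + 2)) = (Fintype.card F - 1) ^ 2 * Fintype.card F ^ (n + 1) := by
  have recursion : #(polysCoeffMem (n + 2) ({0}ᶜ : Finset F)) =
      Fintype.card F * #(polysCoeffMem n ({0}ᶜ : Finset F)) + #(squarefreePolys F (n + 2)) := by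
    rw [card_polysCoeffMem_compl_zero_eq_sum (n + 2), card_polysCoeffMem_compl_zero_eq_sum n,
      show (n + 2) / 2 + 1 = n / 2 + 1 + 1 by omega, sum_range_succ', mul_sum]
    congr 1
    · refine sum_congr rfl fun k _ => ?_
      rw [show n + 2 - 2 * (k + 1) = n - 2 * k by omega]
      ring
    · simp
  simp only [card_polysCoeffMem, card_compl, card_singleton] at recursion
  obtain ⟨u, hu⟩ := Nat.exists_eq_add_of_lt (Fintype.card_pos (α := F))
  rw [hu, zero_add, Nat.add_sub_cancel] at recursion ⊢
  linarith [recursion, show (u + 1) ^ (n + 2) * u =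
    (u + 1) * ((u + 1) ^ n * u) + u ^ 2 * (u + 1) ^ (n + 1) by ring]

theorem card_squarefreePolys_eval_eq_zero (t : F) (n : ℕ) :
    #{f ∈ squarefreePolys F (n + 1) | f.eval t = 0} =
      #{f ∈ squarefreePolys F n | f.eval t ≠ 0} := by
  have key (g : F[X]) : (X - C t) * g ∈ squarefreePolys F (n + 1) ↔
      g ∈ squarefreePolys F n ∧ g.eval t ≠ 0 := by
    rw [mem_squarefreePolys, mem_squarefreePolys, squarefree_mul_iff,
      (irreducible_X_sub_C t).isRelPrime_iff_not_dvd, dvd_iff_isRoot, IsRoot.def]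
    have hdeg (hg : Squarefree g) : ((X - C t) * g).natDegree = g.natDegree + 1 := by
      rw [(monic_X_sub_C t).natDegree_mul' hg.ne_zero, natDegree_X_sub_C, add_comm]
    have hX : Squarefree (X - C t) := (prime_X_sub_C t).squarefree
    constructor
    · rintro ⟨⟨h0, -, hg⟩, hn⟩
      exact ⟨⟨hg, Nat.succ_injective ((hdeg hg).symm.trans hn)⟩, h0⟩
    · rintro ⟨⟨hg, rfl⟩, h0⟩
      exact ⟨⟨h0, hX, hg⟩, hdeg hg⟩
  symm
  refine card_bij (fun g _ => (X - C t) * g) ?_ (fun g _ g' _ h =>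
    mul_left_cancel₀ (X_sub_C_ne_zero t) h) ?_
  · intro g hg
    exact mem_filter.2 ⟨(key g).2 (mem_filter.1 hg), by simp⟩
  · intro f hf
    obtain ⟨hf, h0⟩ := mem_filter.1 hf
    obtain ⟨g, rfl⟩ := dvd_iff_isRoot.2 h0
    exact ⟨g, mem_filter.2 ((key g).1 hf), rfl⟩

end SquarefreePolynomials

section BinaryForms

variable {k : Type*}

section CommRing

variable [CommRing k]

theorem formMul_comm {a b : ℕ} (f : Fin (a + 1) → k) (g : Fin (b + 1) → k) :
    formMul f g = formMul g f ∘ Fin.cast (by omega) := by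
  ext i
  refine Fintype.sum_equiv (Equiv.prodComm _ _) _ _ fun q => ?_
  simp [add_comm, mul_comm]

theorem smul_formMul {a b : ℕ} (u : k) (f : Fin (a + 1) → k) (g : Fin (b + 1) → k) :
    formMul (u • f) g = u • formMul f g := by
  ext i
  simp [formMul, mul_sum, mul_assoc]

theorem formMul_eq_sum_single {a b : ℕ} (f : Fin (a + 1) → k) (g : Fin (b + 1) → k) :
    formMul f g =
      ∑ i : Fin (a + 1), ∑ j : Fin (b + 1),
        Pi.single (⟨i + j, by omega⟩ : Fin (a + b + 1)) (f i * g j) := by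
  ext m
  rw [formMul, Fintype.sum_prod_type]
  simp [Finset.sum_apply, Pi.single_apply, Fin.ext_iff, eq_comm]

theorem pair_eq_dotProductBilin {n : ℕ} (w v : Fin (n + 1) → k) :
    pair w v = dotProductBilin k k w v := rfl

/-- A form `g` of degree `m` is apolar to a dual vector `w` of degree `n + m` if `w` pairs to zero
with every multiple of `g`. The cofactor is the left factor so that `Fin (n + 1 + 1)`, rather than
`Fin (1 + n + 1)`, appears for linear `g`. -/
def IsApolar {m n : ℕ} (g : Fin (m + 1) → k) (w : Fin (n + m + 1) → k) : Prop :=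
  ∀ h : Fin (n + 1) → k, pair w (formMul h g) = 0

theorem IsApolar.mul_add_mul_eq_zero {n : ℕ} {l : Fin 2 → k} {w : Fin (n + 2) → k}
    (hap : IsApolar l w) (i : Fin (n + 1)) : w i.castSucc * l 0 + w i.succ * l 1 = 0 := by
  have h := hap (Pi.single i 1)
  rw [formMul_eq_sum_single, sum_eq_single i (by simp +contextual) (by simp), Fin.sum_univ_two,
    pair_eq_dotProductBilin, map_add] at h
  simp only [dotProductBilin_apply_apply, dotProduct_single, Pi.single_eq_same, one_mul] at h
  exact h

variable [DecidableEq k]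

theorem ofFn_formMul {a b : ℕ} (f : Fin (a + 1) → k) (g : Fin (b + 1) → k) :
    ofFn _ (formMul f g) = ofFn _ f * ofFn _ g := by
  have ofFn_single {n : ℕ} (i : Fin n) (x : k) : ofFn n (Pi.single i x) = monomial i x := by
    rw [ofFn_eq_sum_monomial, sum_eq_single i (by simp +contextual) (by simp), Pi.single_eq_same]
  simp_rw [formMul_eq_sum_single, map_sum, ofFn_single]
  simp_rw [ofFn_eq_sum_monomial, sum_mul_sum, monomial_mul_monomial]

theorem map_ofFn {K : Type*} [CommRing K] [DecidableEq K] (φ : k →+* K) {n : ℕ} (v : Fin n → k) :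
    (ofFn n v).map φ = ofFn n (φ ∘ v) := by
  simp [ofFn_eq_sum_monomial, Polynomial.map_sum]

theorem ofFn_fin_two (l : Fin 2 → k) : ofFn 2 l = C (l 1) * X + C (l 0) := by
  simp [ofFn_eq_sum_monomial, Fin.sum_univ_two, ← C_mul_X_pow_eq_monomial, add_comm]

end CommRing

section Apolar

variable [Field k] {n : ℕ} {l : Fin 2 → k} {w : Fin (n + 2) → k}

theorem IsApolar.pair_eq_mul_eval [DecidableEq k] (hap : IsApolar l w) (hl : l 1 ≠ 0)
    (v : Fin (n + 2) → k) : pair w v = w 0 * (ofFn _ v).eval (-l 0 / l 1) := by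
  have geometric (i : Fin (n + 2)) : w i = w 0 * (-l 0 / l 1) ^ (i : ℕ) := by
    induction i using Fin.induction with
    | zero => simp
    | succ i ih =>
      have h := hap.mul_add_mul_eq_zero i
      rw [Fin.val_succ, pow_succ, ← mul_assoc, ← Fin.val_castSucc, ← ih, mul_div_assoc',
        eq_div_iff hl]
      linear_combination h
  rw [ofFn_eq_sum_monomial, eval_finsetSum, mul_sum, pair]
  refine sum_congr rfl fun i _ => ?_
  rw [geometric i, eval_monomial]
  ring

theorem IsApolar.pair_eq_mul_last (hap : IsApolar l w) (hl : l 1 = 0) (hl' : l 0 ≠ 0)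
    (v : Fin (n + 2) → k) : pair w v = w (Fin.last _) * v (Fin.last _) := by
  have vanish (i : Fin (n + 1)) : w i.castSucc = 0 := by
    simpa [hl, hl'] using hap.mul_add_mul_eq_zero i
  simp [pair, Fin.sum_univ_castSucc, vanish]

end Apolar

section DoubleRoot

variable [Field k]

theorem squarefree_map_iff {K : Type*} [Field K] [PerfectField k] [PerfectField K] (φ : k →+* K)
    {f : k[X]} : Squarefree (f.map φ) ↔ Squarefree f := by
  rw [← PerfectField.separable_iff_squarefree, ← PerfectField.separable_iff_squarefree,
    separable_map]

theorem exists_eq_mul_sq_linear_iff [IsAlgClosed k] {n : ℕ} {f : k[X]} (hf : f.natDegree ≤ n + 2) :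
    (∃ (l : Fin 2 → k) (e : k[X]), l ≠ 0 ∧ e.natDegree ≤ n ∧
      f = e * (C (l 1) * X + C (l 0)) ^ 2) ↔ ¬ Squarefree f ∨ f.natDegree ≤ n := by
  constructor
  · rintro ⟨l, e, -, he, rfl⟩
    by_cases h1 : l 1 = 0
    · right
      rw [h1, C_0, zero_mul, zero_add, ← C_pow]
      exact (natDegree_mul_C_le _ _).trans he
    · left
      intro hs
      have hu := natDegree_eq_zero_of_isUnit (hs _ (Dvd.intro_left e (by rw [sq])))
      rw [natDegree_linear h1] at hu
      exact one_ne_zero hu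
  · rintro (h | h)
    · simp only [Squarefree, not_forall] at h
      obtain ⟨d, hd, hu⟩ := h
      obtain ⟨r, hr⟩ := IsAlgClosed.exists_root d fun h => hu (isUnit_iff_degree_eq_zero.2 h)
      obtain ⟨e, rfl⟩ := (mul_dvd_mul (dvd_iff_isRoot.2 hr) (dvd_iff_isRoot.2 hr)).trans hd
      refine ⟨![-r, 1], e, fun h => by simpa using congrFun h 1, ?_, ?_⟩
      · rcases eq_or_ne e 0 with rfl | he
        · simp
        · rw [← sq, ((monic_X_sub_C r).pow 2).natDegree_mul' he,
            (monic_X_sub_C r).natDegree_pow, natDegree_X_sub_C] at hf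
          omega
      · simp only [Matrix.cons_val_zero, Matrix.cons_val_one, C_1, C_neg]
        ring
    · exact ⟨![1, 0], f, fun h => by simpa using congrFun h 0, h, by simp⟩

theorem exists_eq_formMul_sq_iff [IsAlgClosed k] [DecidableEq k] {n : ℕ} {v : Fin (n + 3) → k} :
    (∃ (l : Fin 2 → k) (c : Fin (n + 1) → k), l ≠ 0 ∧ v = formMul c (formMul l l)) ↔
      ¬ Squarefree (ofFn _ v) ∨ (ofFn _ v).natDegree ≤ n := by
  have natDegree_le {m : ℕ} (v : Fin (m + 1) → k) : (ofFn _ v).natDegree ≤ m :=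
    Nat.lt_succ_iff.1 (ofFn_natDegree_lt m.succ_pos v)
  have ofFn_eq (l : Fin 2 → k) (c : Fin (n + 1) → k) :
      ofFn (n + 3) (formMul c (formMul l l)) = ofFn _ c * (C (l 1) * X + C (l 0)) ^ 2 := by
    rw [ofFn_formMul c (formMul l l), ofFn_formMul l l, ofFn_fin_two, sq]
  rw [← exists_eq_mul_sq_linear_iff (natDegree_le v)]
  constructor
  · rintro ⟨l, c, hl, rfl⟩
    exact ⟨l, ofFn _ c, hl, natDegree_le c, ofFn_eq l c⟩
  · rintro ⟨l, e, hl, he, hv⟩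
    refine ⟨l, toFn _ e, hl, injective_ofFn _ ?_⟩
    rw [hv, ofFn_eq, ofFn_comp_toFn_eq_id_of_natDegree_lt (Nat.lt_succ_iff.2 he)]

/-- A binary form of degree `n + 2` over `k` that is zero or singular: over an algebraic closure
it is divisible by the square of a nonzero linear form (the cofactor `c` may vanish). -/
def HasDoubleRoot {n : ℕ} (v : Fin (n + 3) → k) : Prop :=
  ∃ (l : Fin 2 → AlgebraicClosure k) (c : Fin (n + 1) → AlgebraicClosure k),
    l ≠ 0 ∧ algebraMap k (AlgebraicClosure k) ∘ v = formMul c (formMul l l)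

theorem hasDoubleRoot_iff_eq_zero_or_isSingularQuintic {v : Fin 6 → k} :
    HasDoubleRoot v ↔ v = 0 ∨ IsSingularQuintic v := by
  have hcomm (l : Fin 2 → AlgebraicClosure k) (c : Fin 4 → AlgebraicClosure k) :
      formMul c (formMul l l) = formMul (formMul l l) c := formMul_comm c (formMul l l)
  rcases eq_or_ne v 0 with rfl | hv
  · refine iff_of_true ⟨1, 0, one_ne_zero, ?_⟩ (Or.inl rfl)
    ext i
    simp [formMul]
  · rw [or_iff_right hv, IsSingularQuintic, and_iff_right hv]
    refine exists₂_congr fun l c => and_congr_right' ?_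
    rw [hcomm]
    rfl

theorem not_hasDoubleRoot_iff [PerfectField k] [DecidableEq k] {n : ℕ} {v : Fin (n + 3) → k} :
    ¬ HasDoubleRoot v ↔ Squarefree (ofFn _ v) ∧ n < (ofFn _ v).natDegree := by
  classical
  rw [HasDoubleRoot, exists_eq_formMul_sq_iff, ← map_ofFn, squarefree_map_iff, natDegree_map,
    not_or, not_not, not_le]

theorem HasDoubleRoot.smul {n : ℕ} {v : Fin (n + 3) → k} (hv : HasDoubleRoot v) (u : k) :
    HasDoubleRoot (u • v) := by
  obtain ⟨l, c, hl, h⟩ := hv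
  refine ⟨l, algebraMap k (AlgebraicClosure k) u • c, hl, ?_⟩
  rw [smul_formMul, ← h]
  ext i
  simp

end DoubleRoot

end BinaryForms

section CountingForms

variable {F : Type*} [Field F] [Fintype F]

open scoped Classical in
theorem card_not_hasDoubleRoot_and {n : ℕ} (P : F[X] → Prop) :
    #{v : Fin (n + 3) → F | ¬ HasDoubleRoot v ∧ P (ofFn _ v)} =
      #{f ∈ squarefreePolys F (n + 1) | P f} + #{f ∈ squarefreePolys F (n + 2) | P f} := by
  have hdisj : Disjoint (squarefreePolys F (n + 1)) (squarefreePolys F (n + 2)) :=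
    disjoint_left.2 fun f hf hf' => by
      have h := (mem_squarefreePolys.1 hf).2.symm.trans (mem_squarefreePolys.1 hf').2
      omega
  rw [← card_union_of_disjoint (disjoint_filter_filter hdisj), ← filter_union]
  refine card_bij' (fun v _ => ofFn _ v) (fun f _ => toFn _ f) ?_ ?_
    (fun v _ => toFn_comp_ofFn_eq_id _ v) ?_
  · intro v hv
    rw [mem_filter_univ, not_hasDoubleRoot_iff] at hv
    rw [mem_filter, mem_union, mem_squarefreePolys, mem_squarefreePolys, ← and_or_left]
    have hdeg := ofFn_natDegree_lt (by omega) v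
    exact ⟨⟨hv.1.1, by omega⟩, hv.2⟩
  all_goals
    intro f hf
    rw [mem_filter, mem_union, mem_squarefreePolys, mem_squarefreePolys, ← and_or_left] at hf
    have hof : ofFn (n + 3) (toFn (n + 3) f) = f :=
      ofFn_comp_toFn_eq_id_of_natDegree_lt (by omega)
  · rw [mem_filter_univ, not_hasDoubleRoot_iff, hof]
    exact ⟨⟨hf.1.1, by omega⟩, hf.2⟩
  · exact hof

open scoped Classical in
theorem card_not_hasDoubleRoot (n : ℕ) :
    #{v : Fin (n + 3) → F | ¬ HasDoubleRoot v} =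
      #(squarefreePolys F (n + 1)) + #(squarefreePolys F (n + 2)) := by
  simpa only [and_true, filter_true] using card_not_hasDoubleRoot_and (F := F) (n := n)
    fun _ => True

open scoped Classical in
theorem IsApolar.card_not_hasDoubleRoot_pair_eq_zero {n : ℕ} {w : Fin (n + 3) → F} (hw : w ≠ 0)
    {l : Fin 2 → F} (hl : l ≠ 0) (hap : IsApolar l w) :
    #{v | ¬ HasDoubleRoot v ∧ pair w v = 0} = #(squarefreePolys F (n + 1)) := by
  have hpair : ∃ v, pair w v ≠ 0 := by
    obtain ⟨i, hi⟩ := Function.ne_iff.1 hw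
    exact ⟨Pi.single i 1, by simpa [pair_eq_dotProductBilin] using hi⟩
  obtain ⟨v₀, hv₀⟩ := hpair
  by_cases hl1 : l 1 = 0
  · have hl0 : l 0 ≠ 0 := fun hl0 => hl (by ext i; fin_cases i <;> assumption)
    have hpair := hap.pair_eq_mul_last hl1 hl0
    have hw' := left_ne_zero_of_mul (hpair v₀ ▸ hv₀)
    have hP (v : Fin (n + 3) → F) : pair w v = 0 ↔ (ofFn _ v).coeff (n + 2) = 0 := by
      rw [hpair, mul_eq_zero, or_iff_right hw', ofFn_coeff_eq_val_of_lt v (by omega)]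
      rfl
    simp_rw [hP]
    rw [card_not_hasDoubleRoot_and fun f => f.coeff (n + 2) = 0, filter_true_of_mem,
      filter_false_of_mem, card_empty, add_zero]
    · intro f hf
      obtain ⟨hs, hn⟩ := mem_squarefreePolys.1 hf
      exact hn ▸ leadingCoeff_ne_zero.2 hs.ne_zero
    · intro f hf
      exact coeff_eq_zero_of_natDegree_lt ((mem_squarefreePolys.1 hf).2 ▸ Nat.lt_succ_self _)
  · have hpair := hap.pair_eq_mul_eval hl1
    have hw' := left_ne_zero_of_mul (hpair v₀ ▸ hv₀)
    simp_rw [hpair, mul_eq_zero, or_iff_right hw']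
    rw [card_not_hasDoubleRoot_and fun f => f.eval (-l 0 / l 1) = 0,
      card_squarefreePolys_eval_eq_zero _ (n + 1), card_filter_add_card_filter_not]

end CountingForms

section CharacterSums

variable {F : Type*} [Field F] {R : Type*} [CommRing R] [IsDomain R]
  {ψ : AddChar F R} {V : Type*} [AddCommGroup V] [Module F V]

theorem sum_addChar_linearMap_eq_zero [Fintype V] (hψ : ψ ≠ 1) {L : V →ₗ[F] F} (hL : L ≠ 0) :
    ∑ v, ψ (L v) = 0 := by
  refine AddChar.sum_eq_zero_of_ne_one (ψ := ψ.compAddMonoidHom L.toAddMonoidHom) fun h => hψ ?_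
  ext x
  obtain ⟨v, rfl⟩ := LinearMap.surjective_of_ne_zero hL x
  exact DFunLike.congr_fun h v

theorem card_sub_one_mul_sum_addChar_linearMap [Fintype F] [DecidableEq F] (hψ : ψ.IsPrimitive)
    {A : Finset V} (hA : ∀ u : F, u ≠ 0 → ∀ v ∈ A, u • v ∈ A) (L : V →ₗ[F] F) :
    ((Fintype.card F : R) - 1) * ∑ v ∈ A, ψ (L v) =
      Fintype.card F * #{v ∈ A | L v = 0} - #A := by
  have rescale {u : F} (hu : u ≠ 0) : ∑ v ∈ A, ψ (L v) = ∑ v ∈ A, ψ (u * L v) :=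
    (sum_bij' (fun v _ => u • v) (fun v _ => u⁻¹ • v) (hA _ hu) (hA _ (inv_ne_zero hu))
      (fun v _ => inv_smul_smul₀ hu v) (fun v _ => smul_inv_smul₀ hu v)
      fun v _ => by rw [map_smul, smul_eq_mul]).symm
  have orthogonality (a : F) : ∑ u ∈ univ.erase (0 : F), ψ (u * a) =
      (if a = 0 then (Fintype.card F : R) else 0) - 1 := by
    rw [sum_erase_eq_sub (mem_univ _), AddChar.sum_mulShift a hψ, zero_mul, AddChar.map_zero_eq_one]
    push_cast
    rfl
  calc ((Fintype.card F : R) - 1) * ∑ v ∈ A, ψ (L v)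
      = ∑ _u ∈ univ.erase (0 : F), ∑ v ∈ A, ψ (L v) := by
        rw [sum_const, card_erase_of_mem (mem_univ _), card_univ, nsmul_eq_mul,
          Nat.cast_pred Fintype.card_pos]
    _ = ∑ u ∈ univ.erase (0 : F), ∑ v ∈ A, ψ (u * L v) :=
        sum_congr rfl fun _ hu => rescale (ne_of_mem_erase hu)
    _ = ∑ v ∈ A, ((if L v = 0 then (Fintype.card F : R) else 0) - 1) := by
        rw [sum_comm]
        exact sum_congr rfl fun v _ => orthogonality (L v)
    _ = Fintype.card F * #{v ∈ A | L v = 0} - #A := by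
        rw [sum_sub_distrib, ← sum_filter, sum_const, sum_const, nsmul_eq_mul, nsmul_one, mul_comm]

theorem sum_addChar_pair_eq_zero [Fintype F] (hψ : ψ ≠ 1) {n : ℕ} {w : Fin (n + 1) → F}
    (hw : w ≠ 0) : ∑ v, ψ (pair w v) = 0 :=
  sum_addChar_linearMap_eq_zero (L := dotProductBilin F F w) hψ fun h =>
    hw (dotProduct_eq_zero _ fun v => LinearMap.congr_fun h v)

open scoped Classical in
theorem card_sub_one_mul_sum_addChar_pair_not_hasDoubleRoot [Fintype F] (hψ : ψ.IsPrimitive)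
    {n : ℕ} (w : Fin (n + 3) → F) :
    ((Fintype.card F : R) - 1) * ∑ v with ¬ HasDoubleRoot v, ψ (pair w v) =
      Fintype.card F * #{v | ¬ HasDoubleRoot v ∧ pair w v = 0} -
        #{v : Fin (n + 3) → F | ¬ HasDoubleRoot v} := by
  simp_rw [← filter_filter, pair_eq_dotProductBilin]
  refine card_sub_one_mul_sum_addChar_linearMap hψ (fun u hu v hv => ?_) _
  rw [mem_filter_univ] at hv ⊢
  exact fun h => hv (inv_smul_smul₀ hu v ▸ h.smul u⁻¹)

open scoped Classical in
theorem stmt14_general [Fintype F] [CharZero R] (hψ : ψ.IsPrimitive) {n : ℕ} {w : Fin (n + 4) → F}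
    (hw : w ≠ 0) {l : Fin 2 → F} (hl : l ≠ 0) (hap : IsApolar l w) :
    ∑ v with HasDoubleRoot v, ψ (pair w v) =
      (Fintype.card F : R) ^ (n + 2) - (Fintype.card F : R) ^ (n + 1) := by
  have total : ∑ v, ψ (pair w v) = 0 :=
    sum_addChar_pair_eq_zero (fun h => hψ one_ne_zero (by rw [h, AddChar.mulShift_one])) hw
  rw [← sum_filter_add_sum_filter_not univ HasDoubleRoot] at total
  have regular := card_sub_one_mul_sum_addChar_pair_not_hasDoubleRoot hψ w
  rw [hap.card_not_hasDoubleRoot_pair_eq_zero hw hl, card_not_hasDoubleRoot,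
    card_squarefreePolys_add_two, card_squarefreePolys_add_two] at regular
  push_cast [Nat.cast_pred (R := R) (Fintype.card_pos (α := F))] at regular
  have hq : (Fintype.card F : R) - 1 ≠ 0 :=
    sub_ne_zero.2 (mod_cast (Fintype.one_lt_card (α := F)).ne')
  refine mul_left_cancel₀ hq ?_
  linear_combination ((Fintype.card F : R) - 1) * total - regular

end CharacterSums

open scoped Classical in
theorem expSum_eq_sum_stdAddChar (p : ℕ) [Fact p.Prime] (w : Fin 6 → ZMod p) :
    expSum p w = ∑ v with HasDoubleRoot v, ZMod.stdAddChar (pair w v) := by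
  simp only [expSum, sum_filter, hasDoubleRoot_iff_eq_zero_or_isSingularQuintic,
    ZMod.stdAddChar_apply, ZMod.toCircle_apply]

/-- If `w ∈ V₅` is nonzero and some nonzero linear form `ℓ` over `𝔽_p` is apolar to `w`
(Waring type `⟨1⟩`), then `S(w) = p⁴ - p³`. -/
theorem stmt14 (p : ℕ) [Fact p.Prime] (w : Fin 6 → ZMod p) (hw : w ≠ 0)
    (l : Fin 2 → ZMod p) (hl : l ≠ 0)
    (hap : ∀ h : Fin 5 → ZMod p, pair w (formMul l h) = 0) :
    expSum p w = (p : ℂ) ^ 4 - (p : ℂ) ^ 3 := by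
  rw [expSum_eq_sum_stdAddChar]
  simpa only [ZMod.card] using stmt14_general (ZMod.isPrimitive_stdAddChar p) hw hl
    fun h => (congrArg (pair w) (formMul_comm h l)).trans (hap h)
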